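/- Let G be an n-vertex unicyclic graph whose unique cycle has length l < n, with n ≥ 6, and let x be a vertex of G. Then CC(x) ≥ −l³/6 + n·l²/3 + (7−12n)l/6 + n(6n−7)/3, with equality if and only if G is S_n^l (the cycle C_l with n−l pendant vertices attached to a single cycle vertex) and x is a pendant vertex of G. -/

import Mathlib

open SimpleGraph Finset

attribute [local instance] Classical.propDecidable

variable {V : Type*}

/-- Degree of a vertex as a real number. -/
noncomputable def degR [Fintype V] (G : SimpleGraph V) (x : V) : ℝ :=
  ((Finset.univ.filter fun y => G.Adj x y).card : ℝ)

/-- Number of edges of a graph. -/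
noncomputable def esize (G : SimpleGraph V) : ℕ := Nat.card G.edgeSet

/-- Dirichlet energy of a potential. -/
noncomputable def energyFn [Fintype V] (G : SimpleGraph V) (φ : V → ℝ) : ℝ :=
  (1/2) * ∑ u, ∑ v, if G.Adj u v then (φ u - φ v)^2 else 0

/-- Effective resistance between two vertices (unit resistors on edges),
via the Dirichlet variational principle: the reciprocal of the minimal energy
of a potential with value 1 at `x` and 0 at `y`. -/
noncomputable def eres [Fintype V] (G : SimpleGraph V) (x y : V) : ℝ :=
  (sInf {e : ℝ | ∃ φ : V → ℝ, φ x = 1 ∧ φ y = 0 ∧ e = energyFn G φ})⁻¹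

/-- The transition matrix of the simple random walk, killed at `y`. -/
noncomputable def hitMat [Fintype V] (G : SimpleGraph V) (y : V) : Matrix V V ℝ :=
  Matrix.of fun u v => if v = y then 0 else if G.Adj u v then (degR G u)⁻¹ else 0

/-- Expected hitting time `H_{xy}` of the simple random walk from `x` to `y`,
expressed as the sum of the survival probabilities of the walk killed at `y`. -/
noncomputable def hitting [Fintype V] (G : SimpleGraph V) (x y : V) : ℝ :=
  if x = y then 0 else ∑' k : ℕ, ∑ z, (hitMat G y ^ k) x z

/-- Resistance-centrality `R(x)`. -/
noncomputable def Rres [Fintype V] (G : SimpleGraph V) (x : V) : ℝ := ∑ y, eres G x y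

/-- Weighted resistance-centrality `R^w(x)`. -/
noncomputable def Rw [Fintype V] (G : SimpleGraph V) (x : V) : ℝ :=
  ∑ y, degR G y * eres G x y

/-- Kirchhoff index `Kf(G)`. -/
noncomputable def Kf [Fintype V] (G : SimpleGraph V) : ℝ :=
  (1/2) * ∑ x, ∑ y, eres G x y

/-- Additive degree-Kirchhoff index `Kf⁺(G)`. -/
noncomputable def KfPlus [Fintype V] (G : SimpleGraph V) : ℝ :=
  (1/2) * ∑ x, ∑ y, (degR G x + degR G y) * eres G x y

/-- Multiplicative degree-Kirchhoff index `Kf*(G)`. -/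
noncomputable def KfStar [Fintype V] (G : SimpleGraph V) : ℝ :=
  (1/2) * ∑ x, ∑ y, degR G x * degR G y * eres G x y

/-- Cover cost `CC(x) = Σ_y H_{xy}`. -/
noncomputable def coverCost [Fintype V] (G : SimpleGraph V) (x : V) : ℝ :=
  ∑ y, hitting G x y

/-- Reverse cover cost `RC(x) = Σ_y H_{yx}`. -/
noncomputable def reverseCoverCost [Fintype V] (G : SimpleGraph V) (x : V) : ℝ :=
  ∑ y, hitting G y x

/-- Centrality (transmission) `D(x) = Σ_y d(x,y)`. -/
noncomputable def Dcent [Fintype V] (G : SimpleGraph V) (x : V) : ℝ :=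
  ∑ y, (G.dist x y : ℝ)

/-- Weighted centrality `D^w(x) = Σ_y deg(y)·d(x,y)`. -/
noncomputable def Dw [Fintype V] (G : SimpleGraph V) (x : V) : ℝ :=
  ∑ y, degR G y * (G.dist x y : ℝ)

/-- Wiener index `W(G)`. -/
noncomputable def Wiener [Fintype V] (G : SimpleGraph V) : ℝ :=
  (1/2) * ∑ x, ∑ y, (G.dist x y : ℝ)

/-- `D_{T}(v)`: sum of distances from `v` to the vertices of its connected
component in `G'` (used for the branch trees of a unicyclic graph). -/
noncomputable def branchD [Fintype V] (G' : SimpleGraph V) (v : V) : ℝ :=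
  ∑ u, if G'.Reachable v u then (G'.dist v u : ℝ) else 0

/-- The set of edges of the cycle `c 0 - c 1 - ⋯ - c (l-1) - c 0`. -/
def cycleEdges {l : ℕ} [NeZero l] (c : Fin l → V) : Set (Sym2 V) :=
  Set.range fun i : Fin l => s(c i, c (i + 1))

/-- Distance from a vertex to a set of vertices. -/
noncomputable def distToSet [Fintype V] (G : SimpleGraph V) (x : V) (s : Set V) : ℕ :=
  sInf {d | ∃ y ∈ s, G.dist x y = d}

/-- `v` is the center of a star. -/
def IsStarCenter (G : SimpleGraph V) (v : V) : Prop := ∀ u, u ≠ v → G.Adj v u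

/-- `G` is a star. -/
def IsStar (G : SimpleGraph V) : Prop := ∃ v, IsStarCenter G v

/-- The lollipop graph `P_n^l` : a cycle `C_l` on `0,…,l-1` together with a
path on `l,…,n-1` attached at the cycle vertex `0`. -/
def lollipop (n l : ℕ) : SimpleGraph (Fin n) :=
  SimpleGraph.fromRel (fun a b =>
    (a.val + 1 = b.val ∧ b.val < l) ∨ (a.val = 0 ∧ b.val = l - 1) ∨
    (a.val = 0 ∧ b.val = l) ∨ (l ≤ a.val ∧ a.val + 1 = b.val))

/-- The graph `S_n^l` : a cycle `C_l` on `0,…,l-1` with `n - l` pendant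
vertices `l,…,n-1` attached at the cycle vertex `0`. -/
def starCycle (n l : ℕ) : SimpleGraph (Fin n) :=
  SimpleGraph.fromRel (fun a b =>
    (a.val + 1 = b.val ∧ b.val < l) ∨ (a.val = 0 ∧ b.val = l - 1) ∨
    (a.val = 0 ∧ l ≤ b.val))

/-- The cycle graph `C_n` on `Fin n`. -/
def cycleG (n : ℕ) : SimpleGraph (Fin n) :=
  SimpleGraph.fromRel (fun a b => a.val + 1 = b.val ∨ (a.val = 0 ∧ b.val = n - 1))

/-!
Orient `G` around its cycle and, off the cycle, towards it, so that every vertex gets exactly one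
out-edge. Effective resistances `R` are then explicit: tree distances plus `d (l - d) / l` along
the cycle. Hitting times are the solutions of a Laplace equation, which expresses them through
`R`, and summing over the targets yields
`CC(x) = ∑ u, ∑ v, R u v + ∑ u, h u - n * h x`, where `h` is the distance to the cycle.

Only the last term is negative. Two distinct vertices off the cycle have resistance at least `2`,
or at least `1` if one separates the other from the cycle, and `S_n^l` attains these values.
Raising `h x` above `1` increases the first two terms by at least `(2 * n - 5) * (h x - 1)`, which
for `n ≥ 6` exceeds the `n * (h x - 1)` gained from the last.
-/

open scoped Matrix

section RandomWalk

theorem sum_range_pow_row_sum {ι : Type*} [Fintype ι] [DecidableEq ι] {Q : Matrix ι ι ℝ}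
    {g : ι → ℝ} (hg : g = 1 + Q *ᵥ g) (i : ι) (N : ℕ) :
    ∑ k ∈ range N, ∑ j, (Q ^ k) i j = g i - (Q ^ N *ᵥ g) i := by
  induction N with
  | zero => simp
  | succ N ih =>
    have hN : (Q ^ N *ᵥ g) i = ∑ j, (Q ^ N) i j + (Q ^ (N + 1) *ᵥ g) i := by
      conv_lhs => rw [hg, Matrix.mulVec_add, Matrix.mulVec_mulVec, ← pow_succ]
      simp [Matrix.mulVec, dotProduct]
    rw [sum_range_succ, ih, hN]
    ring

theorem hasSum_pow_row_sum {ι : Type*} [Fintype ι] [DecidableEq ι] {Q : Matrix ι ι ℝ}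
    {g : ι → ℝ} (hQ : ∀ i j, 0 ≤ Q i j) (hg₀ : ∀ i, 0 ≤ g i) (hg : g = 1 + Q *ᵥ g) (i : ι) :
    HasSum (fun k => ∑ j, (Q ^ k) i j) (g i) := by
  have hpow (k : ℕ) (j : ι) : 0 ≤ (Q ^ k) i j := Matrix.pow_apply_nonneg hQ k i j
  have hterm (k : ℕ) : 0 ≤ ∑ j, (Q ^ k) i j := sum_nonneg fun j _ => hpow k j
  have hrem (N : ℕ) : 0 ≤ (Q ^ N *ᵥ g) i :=
    sum_nonneg fun j _ => mul_nonneg (hpow N j) (hg₀ j)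
  have hsummable : Summable fun k => ∑ j, (Q ^ k) i j :=
    summable_of_sum_range_le hterm fun N =>
      (sum_range_pow_row_sum hg i N).trans_le (sub_le_self _ (hrem N))
  have hrem_le (N : ℕ) : (Q ^ N *ᵥ g) i ≤ (∑ j, (Q ^ N) i j) * ∑ j, g j := by
    rw [sum_mul]
    exact sum_le_sum fun j _ =>
      mul_le_mul_of_nonneg_left (single_le_sum (fun j _ => hg₀ j) (mem_univ j)) (hpow N j)
  have hrem_tendsto : Filter.Tendsto (fun N => (Q ^ N *ᵥ g) i) Filter.atTop (nhds 0) :=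
    squeeze_zero hrem hrem_le (by simpa using hsummable.tendsto_atTop_zero.mul_const (∑ j, g j))
  rw [hasSum_iff_tendsto_nat_of_nonneg hterm]
  simpa [sum_range_pow_row_sum hg] using hrem_tendsto.const_sub (g i)

variable [Fintype V] (G : SimpleGraph V)

theorem degR_eq_degree (x : V) : degR G x = G.degree x := by
  rw [degR, ← G.card_neighborFinset_eq_degree, G.neighborFinset_eq_filter]

theorem hitMat_mulVec (y : V) {f : V → ℝ} (hy : f y = 0) (u : V) :
    (hitMat G y *ᵥ f) u = (G.degree u : ℝ)⁻¹ * ∑ v ∈ G.neighborFinset u, f v := by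
  rw [neighborFinset_eq_filter, sum_filter, mul_sum, ← degR_eq_degree]
  refine sum_congr rfl fun v _ => ?_
  rcases eq_or_ne v y with rfl | hv
  · simp [hitMat, hy]
  · simp [hitMat, hv]

theorem hitting_eq_of_mulVec {y : V} {f : V → ℝ} (hf : ∀ u, 0 ≤ f u) (hy : f y = 0)
    (hstep : ∀ u, u ≠ y → f u = 1 + (hitMat G y *ᵥ f) u) (x : V) : hitting G x y = f x := by
  rcases eq_or_ne x y with rfl | hx
  · simp [hitting, hy]
  have hQ (u v : V) : 0 ≤ hitMat G y u v := by
    simp only [hitMat, Matrix.of_apply, degR]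
    positivity
  -- `g` is `f` with its value at `y` replaced by the expected return time.
  set g : V → ℝ := 1 + hitMat G y *ᵥ f with hg
  have hgf : hitMat G y *ᵥ g = hitMat G y *ᵥ f := by
    ext u
    refine sum_congr rfl fun v _ => ?_
    rcases eq_or_ne v y with rfl | hv
    · simp [hitMat]
    · simp only [hg, Pi.add_apply, Pi.one_apply, ← hstep v hv]
  have hg₀ (u : V) : 0 ≤ g u :=
    add_nonneg zero_le_one (sum_nonneg fun v _ => mul_nonneg (hQ u v) (hf v))
  rw [hitting, if_neg hx, (hasSum_pow_row_sum hQ hg₀ (by rw [hgf]) x).tsum_eq, hstep x hx, hg,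
    Pi.add_apply, Pi.one_apply]

theorem nonneg_of_lapMatrix_mulVec_pos {y : V} {φ : V → ℝ} (hy : φ y = 0)
    (hφ : ∀ u, u ≠ y → 0 < (G.lapMatrix ℝ *ᵥ φ) u) (u : V) : 0 ≤ φ u := by
  obtain ⟨w, -, hw⟩ := exists_min_image univ φ ⟨u, mem_univ u⟩
  suffices 0 ≤ φ w from this.trans (hw u (mem_univ u))
  rcases eq_or_ne w y with rfl | hwy
  · exact hy.ge
  have hle : (G.degree w : ℝ) * φ w ≤ ∑ v ∈ G.neighborFinset w, φ v := by
    rw [← nsmul_eq_mul, ← G.card_neighborFinset_eq_degree]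
    exact card_nsmul_le_sum _ _ _ fun v _ => hw v (mem_univ v)
  have hlap := hφ w hwy
  rw [G.lapMatrix_mulVec_apply] at hlap
  linarith

theorem hitting_eq_of_lapMatrix_mulVec {y : V} {φ : V → ℝ} (hdeg : ∀ u, 0 < G.degree u)
    (hy : φ y = 0) (hφ : ∀ u, u ≠ y → (G.lapMatrix ℝ *ᵥ φ) u = G.degree u) (x : V) :
    hitting G x y = φ x := by
  have hdeg' (u : V) : (0 : ℝ) < G.degree u := Nat.cast_pos.mpr (hdeg u)
  refine hitting_eq_of_mulVec G
    (nonneg_of_lapMatrix_mulVec_pos G hy fun u hu => hφ u hu ▸ hdeg' u) hy (fun u hu => ?_) x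
  have hlap := hφ u hu
  rw [G.lapMatrix_mulVec_apply] at hlap
  rw [hitMat_mulVec G y hy]
  field_simp [(hdeg' u).ne']
  linarith

end RandomWalk

/-- A function `R` of two vertices that vanishes on the diagonal and whose differences
`v ↦ R v y - R v z` are the potentials of the unit current flow from `y` to `z`, up to the
factor `-2`. The effective resistance has these properties. -/
structure IsResistanceKernel [Fintype V] (G : SimpleGraph V) (R : V → V → ℝ) : Prop where
  self (u : V) : R u u = 0
  lapMatrix_mulVec_sub (y z u : V) :
    (G.lapMatrix ℝ *ᵥ fun v => R v y - R v z) u =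
      (if u = z then 2 else 0) - if u = y then 2 else 0

namespace IsResistanceKernel

variable [Fintype V] {G : SimpleGraph V} {R : V → V → ℝ}

theorem hitting_eq (hR : IsResistanceKernel G R) (hdeg : ∀ u, 0 < G.degree u) (x y : V) :
    hitting G x y = (∑ z, (G.degree z : ℝ) * (R x y - R x z + R y z)) / 2 := by
  refine hitting_eq_of_lapMatrix_mulVec G
    (φ := fun u => (∑ z, (G.degree z : ℝ) * (R u y - R u z + R y z)) / 2) hdeg
    (by simp [hR.self]) (fun u hu => ?_) x
  have hφ : (fun u => (∑ z, (G.degree z : ℝ) * (R u y - R u z + R y z)) / 2) =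
      ∑ z, ((G.degree z : ℝ) / 2) • ((fun v => R v y - R v z) + R y z • fun _ => 1) := by
    ext u
    simp only [sum_div, Finset.sum_apply, Pi.smul_apply, Pi.add_apply, smul_eq_mul]
    exact sum_congr rfl fun z _ => by ring
  simp [hφ, Matrix.mulVec_sum, Matrix.mulVec_smul, Matrix.mulVec_add,
    hR.lapMatrix_mulVec_sub, hu, lapMatrix_mulVec_const_eq_zero]

theorem coverCost_eq (hR : IsResistanceKernel G R) (hdeg : ∀ u, 0 < G.degree u) (x : V) :
    coverCost G x = (∑ z, (G.degree z : ℝ)) / 2 * ∑ y, R x y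
      + (∑ y, ∑ z, (G.degree z : ℝ) * R y z) / 2
      - Fintype.card V / 2 * ∑ z, (G.degree z : ℝ) * R x z := by
  have hterm (y : V) : hitting G x y = (∑ z, (G.degree z : ℝ)) / 2 * R x y
      - (∑ z, (G.degree z : ℝ) * R x z) / 2 + (∑ z, (G.degree z : ℝ) * R y z) / 2 := by
    rw [hR.hitting_eq hdeg]
    simp only [mul_add, mul_sub, sum_add_distrib, sum_sub_distrib, ← sum_mul]
    ring
  simp only [coverCost, hterm, sum_add_distrib, sum_sub_distrib, ← mul_sum, ← sum_div,
    sum_const, card_univ, nsmul_eq_mul]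
  ring

end IsResistanceKernel

/-- The effective resistance between two vertices at distance `d` along a cycle of length `l`. -/
noncomputable def cycleRes {l : ℕ} (d : Fin l) : ℝ := d * (l - d) / l

section CycleRes

variable {l : ℕ}

theorem cycleRes_nonneg (d : Fin l) : 0 ≤ cycleRes d :=
  div_nonneg (mul_nonneg d.val.cast_nonneg (sub_nonneg.mpr (Nat.cast_le.mpr d.isLt.le)))
    l.cast_nonneg

theorem sum_range_mul_sub (a : ℝ) (m : ℕ) :
    ∑ d ∈ range m, (d : ℝ) * (a - d) = m * (m - 1) * (3 * a + 1 - 2 * m) / 6 := by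
  induction m with
  | zero => simp
  | succ m ih =>
    rw [sum_range_succ, ih]
    push_cast
    ring

variable [NeZero l]

theorem sum_cycleRes : ∑ d : Fin l, cycleRes d = ((l : ℝ) ^ 2 - 1) / 6 := by
  have hl : (l : ℝ) ≠ 0 := NeZero.ne _
  simp only [cycleRes, ← sum_div]
  rw [Fin.sum_univ_eq_sum_range (fun d : ℕ => (d : ℝ) * (l - d)), sum_range_mul_sub]
  field_simp
  ring

@[simp]
theorem cycleRes_zero : cycleRes (0 : Fin l) = 0 := by simp [cycleRes]

theorem cycleRes_eq_zero_iff {d : Fin l} : cycleRes d = 0 ↔ d = 0 := by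
  have hl : (l : ℝ) ≠ 0 := NeZero.ne _
  have hd : (l : ℝ) - d ≠ 0 := sub_ne_zero.mpr (Nat.cast_injective.ne d.isLt.ne')
  simp [cycleRes, hl, hd]

theorem cycleRes_neg (d : Fin l) : cycleRes (-d) = cycleRes d := by
  rcases eq_or_ne d 0 with rfl | hd
  · simp
  rw [cycleRes, cycleRes, Fin.val_neg, if_neg hd, Nat.cast_sub d.isLt.le]
  ring

theorem val_add_one_eq_ite (d : Fin l) :
    (d + 1).val = if d.val + 1 = l then 0 else d.val + 1 := by
  obtain ⟨m, rfl⟩ := Nat.exists_eq_succ_of_ne_zero (NeZero.ne l)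
  simp [Fin.val_add_one, Fin.ext_iff]

theorem cycleRes_add_one (d : Fin l) : cycleRes (d + 1) = (d.val + 1) * (l - (d.val + 1)) / l := by
  rw [cycleRes, val_add_one_eq_ite]
  split_ifs with hd
  · simp [← hd]
  · push_cast
    rfl

theorem two_mul_cycleRes_sub (d : Fin l) :
    2 * cycleRes d - cycleRes (d + 1) - cycleRes (d - 1) = 2 / l - if d = 0 then 2 else 0 := by
  have hl : (l : ℝ) ≠ 0 := NeZero.ne _
  obtain ⟨e, rfl⟩ : ∃ e, d = e + 1 := ⟨d - 1, (sub_add_cancel d 1).symm⟩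
  have hval := val_add_one_eq_ite e
  rw [cycleRes_add_one (e + 1), add_sub_cancel_right]
  by_cases hwrap : e.val + 1 = l
  · have hzero : e + 1 = 0 := Fin.ext (by simpa [hwrap] using hval)
    have he : (e.val : ℝ) = l - 1 := eq_sub_of_add_eq (by exact_mod_cast hwrap)
    simp only [hzero, Fin.val_zero, Nat.cast_zero, if_true, cycleRes, he]
    field_simp
    ring
  · rw [if_neg hwrap] at hval
    have hne : e + 1 ≠ 0 := fun h => by simp [h] at hval
    rw [if_neg hne, cycleRes, cycleRes, hval]
    push_cast
    field_simp
    ring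

end CycleRes

/-- A rooted description of a connected unicyclic graph: every vertex `v` has an out-edge to
`succ v`, leading around the cycle when `v` lies on it and one step closer to the cycle otherwise;
`height` is the distance to the cycle. -/
structure CycleRootedTree (V : Type*) (l : ℕ) [NeZero l] where
  cycle : Fin l → V
  succ : V → V
  height : V → ℕ
  three_le : 3 ≤ l
  cycle_injective : Function.Injective cycle
  succ_cycle (i : Fin l) : succ (cycle i) = cycle (i + 1)
  height_eq_zero_iff (v : V) : height v = 0 ↔ v ∈ Set.range cycle
  height_succ {v : V} : height v ≠ 0 → height (succ v) + 1 = height v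

namespace CycleRootedTree

variable {l : ℕ} [NeZero l] (T : CycleRootedTree V l)

@[simp]
theorem height_cycle (i : Fin l) : T.height (T.cycle i) = 0 :=
  (T.height_eq_zero_iff _).mpr ⟨i, rfl⟩

@[elab_as_elim]
theorem induction {p : V → Prop} (cycle : ∀ i, p (T.cycle i))
    (step : ∀ v, T.height v ≠ 0 → p (T.succ v) → p v) (v : V) : p v := by
  induction hv : T.height v generalizing v with
  | zero =>
    obtain ⟨i, rfl⟩ := (T.height_eq_zero_iff v).mp hv
    exact cycle i
  | succ h ih =>
    have hv₀ : T.height v ≠ 0 := by omega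
    exact step v hv₀ (ih _ (by have := T.height_succ hv₀; omega))

theorem height_succ_le (v : V) : T.height (T.succ v) ≤ T.height v := by
  rcases eq_or_ne (T.height v) 0 with hv | hv
  · obtain ⟨i, rfl⟩ := (T.height_eq_zero_iff v).mp hv
    simp [T.succ_cycle]
  · exact (Nat.le_succ _).trans (T.height_succ hv).le

theorem succ_succ_ne (v : V) : T.succ (T.succ v) ≠ v := by
  intro h
  rcases eq_or_ne (T.height v) 0 with hv | hv
  · obtain ⟨i, rfl⟩ := (T.height_eq_zero_iff v).mp hv
    rw [T.succ_cycle, T.succ_cycle, T.cycle_injective.eq_iff, add_assoc, add_eq_left] at h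
    obtain ⟨m, rfl⟩ := Nat.exists_eq_add_of_le' T.three_le
    have : 2 % (m + 3) = 0 := by simpa [Fin.ext_iff, Fin.val_add] using h
    rw [Nat.mod_eq_of_lt (by omega)] at this
    contradiction
  · have := T.height_succ_le (T.succ v)
    have := T.height_succ hv
    rw [h] at *
    omega

theorem succ_ne (v : V) : T.succ v ≠ v := fun h => T.succ_succ_ne v (by rw [h, h])

/-- The undirected graph formed by the out-edges. -/
def graph : SimpleGraph V where
  Adj u v := v = T.succ u ∨ u = T.succ v
  symm := ⟨fun _ _ => Or.symm⟩
  loopless := ⟨fun v h => T.succ_ne v (h.elim Eq.symm Eq.symm)⟩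

theorem adj_succ (v : V) : T.graph.Adj v (T.succ v) := Or.inl rfl

section Laplacian

variable [Fintype V]

theorem sum_neighborFinset (u : V) (f : V → ℝ) :
    ∑ v ∈ T.graph.neighborFinset u, f v = f (T.succ u) + ∑ v with T.succ v = u, f v := by
  have hN : T.graph.neighborFinset u = insert (T.succ u) ({v | T.succ v = u} : Finset V) := by
    ext v
    simp only [mem_neighborFinset, mem_insert, mem_filter, mem_univ, true_and]
    exact or_congr_right eq_comm
  rw [hN, sum_insert (by simpa using T.succ_succ_ne u)]

theorem degree_eq (u : V) : (T.graph.degree u : ℝ) = 1 + #{v | T.succ v = u} := by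
  simpa using T.sum_neighborFinset u 1

theorem degree_pos (u : V) : 0 < T.graph.degree u :=
  (T.graph.degree_pos_iff_exists_adj u).mpr ⟨_, T.adj_succ u⟩

theorem sum_degree_mul (f : V → ℝ) :
    ∑ u, (T.graph.degree u : ℝ) * f u = ∑ u, f u + ∑ u, f (T.succ u) := by
  rw [← sum_fiberwise' univ T.succ f, ← sum_add_distrib]
  simp [degree_eq, add_mul]

theorem lapMatrix_mulVec (φ : V → ℝ) (u : V) :
    (T.graph.lapMatrix ℝ *ᵥ φ) u =
      φ u - φ (T.succ u) - ∑ v with T.succ v = u, (φ v - φ (T.succ v)) := by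
  have hsucc : ∑ v with T.succ v = u, φ (T.succ v) = #{v | T.succ v = u} * φ u := by
    rw [sum_congr rfl fun v hv => by rw [(mem_filter.mp hv).2], sum_const, nsmul_eq_mul]
  rw [lapMatrix_mulVec_apply, sum_neighborFinset, degree_eq, sum_sub_distrib, hsucc]
  ring

end Laplacian

/-- The index of the cycle vertex reached from `v` by following the out-edges. -/
noncomputable def root (v : V) : Fin l :=
  Function.invFun T.cycle (T.succ^[T.height v] v)

/-- The vertices off the cycle on the path from `v` to the cycle, including `v`. -/
noncomputable def stem (v : V) : Finset V :=
  (range (T.height v)).image (T.succ^[·] v)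

@[simp]
theorem root_cycle (i : Fin l) : T.root (T.cycle i) = i := by
  simp [root, Function.leftInverse_invFun T.cycle_injective i]

theorem root_succ {v : V} (hv : T.height v ≠ 0) : T.root (T.succ v) = T.root v := by
  rw [root, root, ← T.height_succ hv, Function.iterate_succ_apply]

@[simp]
theorem stem_cycle (i : Fin l) : T.stem (T.cycle i) = ∅ := by simp [stem]

theorem stem_eq_insert {v : V} (hv : T.height v ≠ 0) :
    T.stem v = insert v (T.stem (T.succ v)) := by
  rw [stem, stem, ← T.height_succ hv, range_add_one', image_insert, map_eq_image, image_image]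
  rfl

theorem height_le_of_mem_stem {u v : V} (hu : u ∈ T.stem v) : T.height u ≤ T.height v := by
  induction v using T.induction with
  | cycle i => simp at hu
  | step v hv ih =>
    rw [T.stem_eq_insert hv, mem_insert] at hu
    rcases hu with rfl | hu
    · exact le_rfl
    · exact (ih hu).trans (T.height_succ_le v)

theorem height_ne_zero_of_mem_stem {u v : V} (hu : u ∈ T.stem v) : T.height u ≠ 0 := by
  induction v using T.induction with
  | cycle i => simp at hu
  | step v hv ih =>
    rw [T.stem_eq_insert hv, mem_insert] at hu
    exact hu.elim (fun h => h ▸ hv) ih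

theorem notMem_stem_succ {v : V} (hv : T.height v ≠ 0) : v ∉ T.stem (T.succ v) := fun h => by
  have := T.height_le_of_mem_stem h
  have := T.height_succ hv
  omega

@[simp]
theorem card_stem (v : V) : #(T.stem v) = T.height v := by
  induction v using T.induction with
  | cycle i => simp
  | step v hv ih =>
    rw [T.stem_eq_insert hv, card_insert_of_notMem (T.notMem_stem_succ hv), ih, T.height_succ hv]

theorem mem_stem_self {v : V} (hv : T.height v ≠ 0) : v ∈ T.stem v := by
  simp [T.stem_eq_insert hv]

theorem card_stem_inter (v : V) (hv : T.height v ≠ 0) (s : Finset V) :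
    #(T.stem v ∩ s) = #(T.stem (T.succ v) ∩ s) + if v ∈ s then 1 else 0 := by
  rw [T.stem_eq_insert hv]
  split_ifs with hvs
  · rw [insert_inter_of_mem hvs,
      card_insert_of_notMem fun h => T.notMem_stem_succ hv (mem_inter.mp h).1]
  · rw [insert_inter_of_notMem hvs, add_zero]

theorem card_filter_stem_succ (u v : V) :
    (#{w ∈ T.stem v | T.succ w = u} : ℝ) =
      (if u ∈ T.stem v then 1 else 0) + (if u = T.cycle (T.root v) then 1 else 0)
        - if u = v then 1 else 0 := by
  induction v using T.induction with
  | cycle i => simp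
  | step v hv ih =>
    have hnot := T.notMem_stem_succ hv
    rw [natCast_card_filter] at ih ⊢
    rw [T.stem_eq_insert hv, sum_insert hnot, ih, T.root_succ hv]
    rcases eq_or_ne u v with rfl | huv
    · simp [hnot, eq_comm]
    · simp [huv, eq_comm]

/-- The effective resistance in `T.graph`. -/
noncomputable def res (u v : V) : ℝ :=
  T.height u + T.height v - 2 * #(T.stem u ∩ T.stem v) + cycleRes (T.root u - T.root v)

@[simp]
theorem res_self (u : V) : T.res u u = 0 := by
  rw [res, inter_self, card_stem, sub_self, cycleRes_zero]
  ring

theorem res_comm (u v : V) : T.res u v = T.res v u := by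
  rw [res, res, inter_comm, ← cycleRes_neg, neg_sub, add_comm (T.height u : ℝ)]

theorem res_cycle (i : Fin l) (v : V) :
    T.res (T.cycle i) v = T.height v + cycleRes (i - T.root v) := by
  simp [res]

theorem res_succ {u : V} (hu : T.height u ≠ 0) (v : V) :
    T.res (T.succ u) v = T.res u v - 1 + if u ∈ T.stem v then 2 else 0 := by
  have hheight : (T.height u : ℝ) = T.height (T.succ u) + 1 := by
    exact_mod_cast (T.height_succ hu).symm
  rw [res, res, T.card_stem_inter u hu, T.root_succ hu, hheight]
  push_cast
  split_ifs <;> ring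

theorem sum_res_cycle (u : V) :
    ∑ i, T.res u (T.cycle i) = l * T.height u + ((l : ℝ) ^ 2 - 1) / 6 := by
  have hshift : ∑ i, cycleRes (i - T.root u) = ∑ d : Fin l, cycleRes d :=
    Fintype.sum_equiv (Equiv.subRight _) _ _ fun _ => rfl
  simp [T.res_comm u, res_cycle, sum_add_distrib, hshift, sum_cycleRes]

variable [Fintype V]

/-- The vertices off the cycle whose out-edge leads to `u`. -/
noncomputable def children (u : V) : Finset V := {v | T.height v ≠ 0 ∧ T.succ v = u}

theorem sum_children_res (u v : V) :
    ∑ w ∈ T.children u, (T.res w v - T.res (T.succ w) v) =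
      #(T.children u) - 2 * #{w ∈ T.stem v | T.succ w = u} := by
  have hstem : {w ∈ T.stem v | T.succ w = u} = {w ∈ T.children u | w ∈ T.stem v} := by
    ext w
    simp only [children, mem_filter, mem_univ, true_and]
    exact ⟨fun h => ⟨⟨T.height_ne_zero_of_mem_stem h.1, h.2⟩, h.1⟩, fun h => ⟨h.2, h.1.2⟩⟩
  have hdrop (w : V) (hw : w ∈ T.children u) :
      T.res w v - T.res (T.succ w) v = 1 - 2 * if w ∈ T.stem v then 1 else 0 := by
    rw [T.res_succ (mem_filter.mp hw).2.1]
    split_ifs <;> ring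
  rw [sum_congr rfl hdrop, sum_sub_distrib, ← mul_sum, ← natCast_card_filter, hstem]
  simp

theorem lapMatrix_mulVec_of_height_ne_zero (φ : V → ℝ) {u : V} (hu : T.height u ≠ 0) :
    (T.graph.lapMatrix ℝ *ᵥ φ) u =
      φ u - φ (T.succ u) - ∑ v ∈ T.children u, (φ v - φ (T.succ v)) := by
  have hfiber : ({v | T.succ v = u} : Finset V) = T.children u := by
    refine filter_congr fun v _ => ⟨?_, And.right⟩
    rintro rfl
    exact ⟨fun hv => hu (Nat.le_zero.mp (hv ▸ T.height_succ_le v)), rfl⟩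
  rw [lapMatrix_mulVec, hfiber]

theorem lapMatrix_mulVec_cycle (φ : V → ℝ) (i : Fin l) :
    (T.graph.lapMatrix ℝ *ᵥ φ) (T.cycle i) =
      2 * φ (T.cycle i) - φ (T.cycle (i + 1)) - φ (T.cycle (i - 1))
        - ∑ v ∈ T.children (T.cycle i), (φ v - φ (T.succ v)) := by
  have hprev : T.succ (T.cycle (i - 1)) = T.cycle i := by rw [T.succ_cycle, sub_add_cancel]
  have hfiber : ({v | T.succ v = T.cycle i} : Finset V) =
      insert (T.cycle (i - 1)) (T.children (T.cycle i)) := by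
    ext v
    simp only [children, mem_insert, mem_filter, mem_univ, true_and]
    refine ⟨fun hv => or_iff_not_imp_right.mpr fun hv' => ?_, ?_⟩
    · obtain ⟨j, rfl⟩ := (T.height_eq_zero_iff v).mp (by tauto)
      rw [T.succ_cycle, T.cycle_injective.eq_iff] at hv
      rw [← hv, add_sub_cancel_right]
    · rintro (rfl | hv)
      exacts [hprev, hv.2]
  rw [lapMatrix_mulVec, hfiber, sum_insert (by simp [children]), hprev, T.succ_cycle]
  ring

theorem lapMatrix_mulVec_res (u v : V) :
    (T.graph.lapMatrix ℝ *ᵥ (T.res · v)) u =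
      (if T.height u = 0 then (2 / l : ℝ) else 1) - #(T.children u) - if u = v then 2 else 0 := by
  rcases eq_or_ne (T.height u) 0 with hu | hu
  · obtain ⟨i, rfl⟩ := (T.height_eq_zero_iff u).mp hu
    have hnot : T.cycle i ∉ T.stem v := fun h => T.height_ne_zero_of_mem_stem h hu
    have hcycle := two_mul_cycleRes_sub (i - T.root v)
    rw [T.lapMatrix_mulVec_cycle, T.sum_children_res, T.card_filter_stem_succ, if_neg hnot,
      if_pos hu, T.res_cycle, T.res_cycle, T.res_cycle, add_sub_right_comm i,
      sub_right_comm i]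
    simp only [sub_eq_zero, T.cycle_injective.eq_iff] at hcycle ⊢
    split_ifs at hcycle ⊢ <;> linarith
  · have hne : u ≠ T.cycle (T.root v) := fun h => hu (h ▸ T.height_cycle _)
    rw [T.lapMatrix_mulVec_of_height_ne_zero _ hu, T.sum_children_res, T.card_filter_stem_succ,
      T.res_succ hu, if_neg hu, if_neg hne]
    split_ifs <;> ring

theorem isResistanceKernel_res : IsResistanceKernel T.graph T.res where
  self := T.res_self
  lapMatrix_mulVec_sub y z u := by
    have hsub : (fun v => T.res v y - T.res v z) = (T.res · y) - (T.res · z) := rfl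
    rw [hsub, Matrix.mulVec_sub, Pi.sub_apply, T.lapMatrix_mulVec_res, T.lapMatrix_mulVec_res]
    ring

end CycleRootedTree

theorem two_mul_sum_sub_self_le_sum_sum {ι : Type*} {s : Finset ι} {g : ι → ι → ℝ}
    (hg : ∀ i ∈ s, ∀ j ∈ s, 0 ≤ g i j) (hsymm : ∀ i j, g i j = g j i) {a : ι} (ha : a ∈ s) :
    2 * ∑ j ∈ s, g a j - g a a ≤ ∑ i ∈ s, ∑ j ∈ s, g i j := by
  have hrow : ∑ i ∈ s.erase a, g i a ≤ ∑ i ∈ s.erase a, ∑ j ∈ s, g i j :=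
    sum_le_sum fun i hi =>
      single_le_sum (f := g i) (fun j hj => hg i (mem_of_mem_erase hi) j hj) ha
  have hcol : g a a + ∑ i ∈ s.erase a, g i a = ∑ j ∈ s, g a j := by
    rw [add_sum_erase s (g · a) ha]
    exact sum_congr rfl fun i _ => hsymm i a
  rw [← add_sum_erase s (fun i => ∑ j ∈ s, g i j) ha]
  linarith

/-- The cover cost of the graph `S_n^l` from one of its pendant vertices. -/
noncomputable def starCoverCost (l n : ℝ) : ℝ :=
  -l ^ 3 / 6 + n * l ^ 2 / 3 + (7 - 12 * n) * l / 6 + n * (6 * n - 7) / 3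

namespace CycleRootedTree

variable {l : ℕ} [NeZero l] (T : CycleRootedTree V l)

/-- For distinct vertices `u`, `v` off the cycle, the excess of `T.res u v` over the least value
that the relative position of `u` and `v` allows, which is `1` if one of them lies on the stem of
the other and `2` otherwise. It vanishes identically if the off-cycle vertices are pendant
neighbours of a single cycle vertex. -/
noncomputable def slack (u v : V) : ℝ :=
  T.res u v - 2 + (if v ∈ T.stem u then 1 else 0) + if u ∈ T.stem v then 1 else 0

theorem slack_comm (u v : V) : T.slack u v = T.slack v u := by
  rw [slack, slack, T.res_comm u v]
  ring

/-- All off-cycle vertices are pendant neighbours of the cycle vertex with index `i`. -/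
def IsStarAt (i : Fin l) : Prop := ∀ v, T.height v ≠ 0 → T.succ v = T.cycle i

namespace IsStarAt

variable {T} {i : Fin l}

theorem height_eq_one (hT : T.IsStarAt i) {v : V} (hv : T.height v ≠ 0) : T.height v = 1 := by
  rw [← T.height_succ hv, hT v hv, height_cycle]

theorem root_eq (hT : T.IsStarAt i) {v : V} (hv : T.height v ≠ 0) : T.root v = i := by
  rw [← T.root_succ hv, hT v hv, root_cycle]

theorem stem_eq (hT : T.IsStarAt i) {v : V} (hv : T.height v ≠ 0) : T.stem v = {v} := by
  rw [T.stem_eq_insert hv, hT v hv, stem_cycle, insert_empty_eq]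

end IsStarAt

variable [Fintype V]

/-- The vertices that do not lie on the cycle. -/
noncomputable def offCycle : Finset V := {v | T.height v ≠ 0}

theorem mem_offCycle {v : V} : v ∈ T.offCycle ↔ T.height v ≠ 0 := by simp [offCycle]

theorem stem_subset_offCycle (v : V) : T.stem v ⊆ T.offCycle := fun _ hu =>
  T.mem_offCycle.mpr (T.height_ne_zero_of_mem_stem hu)

theorem sum_eq_sum_cycle_add_sum_offCycle (f : V → ℝ) :
    ∑ v, f v = ∑ i, f (T.cycle i) + ∑ v ∈ T.offCycle, f v := by
  have hcycle : ({v | T.height v = 0} : Finset V) = univ.map ⟨T.cycle, T.cycle_injective⟩ := by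
    ext v
    simp [T.height_eq_zero_iff]
  rw [← sum_filter_add_sum_filter_not univ (T.height · = 0), hcycle, sum_map]
  rfl

theorem card_eq : (Fintype.card V : ℝ) = l + #T.offCycle := by
  simpa using T.sum_eq_sum_cycle_add_sum_offCycle 1

theorem sum_height_eq : ∑ v, (T.height v : ℝ) = ∑ v ∈ T.offCycle, (T.height v : ℝ) := by
  simp [T.sum_eq_sum_cycle_add_sum_offCycle]

theorem sum_mem_stem (v : V) :
    ∑ u ∈ T.offCycle, (if u ∈ T.stem v then (1 : ℝ) else 0) = T.height v := by
  rw [← natCast_card_filter, filter_mem_eq_inter, inter_eq_right.mpr (T.stem_subset_offCycle v),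
    card_stem]

theorem sum_degree : ∑ u, (T.graph.degree u : ℝ) = 2 * Fintype.card V := by
  simpa [two_mul] using T.sum_degree_mul 1

theorem sum_degree_mul_res (u : V) :
    ∑ v, (T.graph.degree v : ℝ) * T.res u v =
      2 * ∑ v, T.res u v + 2 * T.height u - #T.offCycle := by
  have hcycle : ∑ i, T.res u (T.succ (T.cycle i)) = ∑ i, T.res u (T.cycle i) := by
    simp only [succ_cycle]
    exact Fintype.sum_equiv (Equiv.addRight 1) _ _ fun _ => rfl
  have hoff : ∑ v ∈ T.offCycle, T.res u (T.succ v) =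
      ∑ v ∈ T.offCycle, T.res u v - #T.offCycle + 2 * T.height u := by
    rw [← T.sum_mem_stem u, mul_sum, ← nsmul_one, ← sum_const, ← sum_sub_distrib,
      ← sum_add_distrib]
    refine sum_congr rfl fun v hv => ?_
    rw [T.res_comm u, T.res_succ (T.mem_offCycle.mp hv), T.res_comm u, mul_ite, mul_one, mul_zero]
  rw [sum_degree_mul, T.sum_eq_sum_cycle_add_sum_offCycle fun v => T.res u (T.succ v), hcycle,
    hoff, T.sum_eq_sum_cycle_add_sum_offCycle (T.res u)]
  ring

theorem coverCost_graph (x : V) :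
    coverCost T.graph x =
      ∑ u, ∑ v, T.res u v + ∑ u, (T.height u : ℝ) - Fintype.card V * T.height x := by
  rw [T.isResistanceKernel_res.coverCost_eq T.degree_pos]
  simp only [sum_degree, sum_degree_mul_res, sum_sub_distrib, sum_add_distrib, ← mul_sum,
    sum_const, card_univ, nsmul_eq_mul]
  ring

theorem sum_sum_res :
    ∑ u, ∑ v, T.res u v = 2 * l * ∑ u, (T.height u : ℝ)
      + (Fintype.card V + #T.offCycle) * (((l : ℝ) ^ 2 - 1) / 6)
      + ∑ u ∈ T.offCycle, ∑ v ∈ T.offCycle, T.res u v := by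
  have hrow (u : V) : ∑ v, T.res u v =
      l * T.height u + ((l : ℝ) ^ 2 - 1) / 6 + ∑ v ∈ T.offCycle, T.res u v := by
    rw [T.sum_eq_sum_cycle_add_sum_offCycle, T.sum_res_cycle]
  have hcol (v : V) : ∑ u, T.res u v = ∑ u, T.res v u := sum_congr rfl fun u _ => T.res_comm u v
  have hoff : ∑ u, ∑ v ∈ T.offCycle, T.res u v = l * ∑ u, (T.height u : ℝ)
      + #T.offCycle * (((l : ℝ) ^ 2 - 1) / 6)
      + ∑ u ∈ T.offCycle, ∑ v ∈ T.offCycle, T.res u v := by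
    rw [sum_comm]
    simp only [hcol, hrow, sum_add_distrib, ← mul_sum, sum_const, nsmul_eq_mul, sum_height_eq]
  simp only [hrow, sum_add_distrib, ← mul_sum, sum_const, card_univ, nsmul_eq_mul, hoff]
  ring

theorem slack_self {u : V} (hu : u ∈ T.offCycle) : T.slack u u = 0 := by
  rw [slack, T.res_self, if_pos (T.mem_stem_self (T.mem_offCycle.mp hu))]
  ring

theorem card_stem_inter_add_one_le {v : V} (hv : v ∈ T.offCycle) (u : V) :
    (#(T.stem u ∩ T.stem v) : ℝ) + 1 ≤ T.height v + if v ∈ T.stem u then 1 else 0 := by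
  split_ifs with h
  · gcongr
    rw [← T.card_stem v]
    exact card_le_card inter_subset_right
  · have hlt : #(T.stem u ∩ T.stem v) < #(T.stem v) := card_lt_card <| ssubset_iff_of_subset
      inter_subset_right |>.mpr ⟨v, T.mem_stem_self (T.mem_offCycle.mp hv), by simp [h]⟩
    rw [card_stem] at hlt
    rw [add_zero]
    exact_mod_cast hlt

theorem cycleRes_le_slack {u v : V} (hu : u ∈ T.offCycle) (hv : v ∈ T.offCycle) :
    cycleRes (T.root u - T.root v) ≤ T.slack u v := by
  have huv := T.card_stem_inter_add_one_le hv u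
  have hvu := T.card_stem_inter_add_one_le hu v
  rw [inter_comm] at hvu
  rw [slack, res]
  linarith

theorem slack_nonneg {u v : V} (hu : u ∈ T.offCycle) (hv : v ∈ T.offCycle) : 0 ≤ T.slack u v :=
  (cycleRes_nonneg _).trans (T.cycleRes_le_slack hu hv)

theorem height_sub_height_le_slack (u : V) {v : V} (hv : v ∈ T.offCycle) :
    (T.height u : ℝ) - T.height v + (if u ∈ T.stem v then 1 else 0)
      - (if v ∈ T.stem u then 1 else 0) ≤ T.slack u v := by
  have huv := T.card_stem_inter_add_one_le hv u
  have hcycle := cycleRes_nonneg (T.root u - T.root v)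
  rw [slack, res]
  linarith

theorem sum_sum_res_offCycle :
    ∑ u ∈ T.offCycle, ∑ v ∈ T.offCycle, T.res u v =
      ∑ u ∈ T.offCycle, ∑ v ∈ T.offCycle, T.slack u v + 2 * (#T.offCycle : ℝ) ^ 2
        - 2 * ∑ u ∈ T.offCycle, (T.height u : ℝ) := by
  have hflip : ∑ u ∈ T.offCycle, ∑ v ∈ T.offCycle, (if u ∈ T.stem v then (1 : ℝ) else 0) =
      ∑ u ∈ T.offCycle, (T.height u : ℝ) := by
    rw [sum_comm]
    simp only [sum_mem_stem]
  simp only [slack, sum_add_distrib, sum_sub_distrib, sum_mem_stem, sum_const, nsmul_eq_mul, hflip]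
  ring

theorem coverCost_graph_eq_starCoverCost_add (x : V) :
    coverCost T.graph x = starCoverCost l (Fintype.card V)
      + (2 * l - 1) * ∑ u ∈ T.offCycle, ((T.height u : ℝ) - 1)
      + ∑ u ∈ T.offCycle, ∑ v ∈ T.offCycle, T.slack u v
      - Fintype.card V * (T.height x - 1) := by
  rw [coverCost_graph, sum_sum_res, sum_sum_res_offCycle, sum_height_eq, starCoverCost, T.card_eq,
    sum_sub_distrib, sum_const, nsmul_eq_mul]
  ring

theorem height_sub_one_nonneg {v : V} (hv : v ∈ T.offCycle) : 0 ≤ (T.height v : ℝ) - 1 :=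
  sub_nonneg.mpr <| Nat.one_le_cast.mpr <| Nat.one_le_iff_ne_zero.mpr <| T.mem_offCycle.mp hv

theorem sum_height_sub_one_nonneg : 0 ≤ ∑ v ∈ T.offCycle, ((T.height v : ℝ) - 1) :=
  sum_nonneg fun _ => T.height_sub_one_nonneg

theorem sum_sum_slack_nonneg : 0 ≤ ∑ u ∈ T.offCycle, ∑ v ∈ T.offCycle, T.slack u v :=
  sum_nonneg fun _ hu => sum_nonneg fun _ hv => T.slack_nonneg hu hv

theorem le_sum_slack {x : V} (hx : x ∈ T.offCycle) :
    (#T.offCycle - 1) * (T.height x - 1 : ℝ) - ∑ v ∈ T.offCycle, ((T.height v : ℝ) - 1) ≤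
      ∑ v ∈ T.offCycle, T.slack x v := by
  have hbound := sum_le_sum fun v (hv : v ∈ T.offCycle) =>
    T.height_sub_height_le_slack x hv
  have hself : (1 : ℝ) ≤ ∑ v ∈ T.offCycle, if x ∈ T.stem v then 1 else 0 := by
    simpa [T.mem_stem_self (T.mem_offCycle.mp hx)] using
      single_le_sum (f := fun v => if x ∈ T.stem v then (1 : ℝ) else 0)
        (fun v _ => by positivity) hx
  simp only [sum_add_distrib, sum_sub_distrib, sum_mem_stem, sum_const, nsmul_eq_mul] at hbound ⊢
  linarith

theorem starCoverCost_add_le_coverCost {x : V} (hx : x ∈ T.offCycle) :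
    starCoverCost l (Fintype.card V) + (Fintype.card V - 5) * (T.height x - 1) ≤
      coverCost T.graph x := by
  have hl : (3 : ℝ) ≤ l := by exact_mod_cast T.three_le
  have hheight : (T.height x : ℝ) - 1 ≤ ∑ v ∈ T.offCycle, ((T.height v : ℝ) - 1) :=
    single_le_sum (f := fun v => (T.height v : ℝ) - 1) (fun _ hv => T.height_sub_one_nonneg hv) hx
  have hslack := two_mul_sum_sub_self_le_sum_sum (g := T.slack)
    (fun _ hu _ hv => T.slack_nonneg hu hv) T.slack_comm hx
  rw [T.slack_self hx] at hslack
  have hrow := T.le_sum_slack hx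
  rw [coverCost_graph_eq_starCoverCost_add, T.card_eq]
  linarith [mul_le_mul_of_nonneg_left hheight (by linarith : (0 : ℝ) ≤ 2 * l - 3)]

theorem starCoverCost_lt_coverCost_of_height_eq_zero {x : V} (hx : T.height x = 0) :
    starCoverCost l (Fintype.card V) < coverCost T.graph x := by
  have hl : (3 : ℝ) ≤ l := by exact_mod_cast T.three_le
  have hcard : (0 : ℝ) < Fintype.card V := Nat.cast_pos.mpr (Fintype.card_pos_iff.mpr ⟨x⟩)
  have hheight := mul_nonneg (by linarith : (0 : ℝ) ≤ 2 * l - 1) T.sum_height_sub_one_nonneg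
  rw [coverCost_graph_eq_starCoverCost_add, hx, Nat.cast_zero]
  linarith [T.sum_sum_slack_nonneg]

theorem starCoverCost_lt_coverCost {x : V} (hcard : 6 ≤ Fintype.card V) (hx : T.height x ≠ 1) :
    starCoverCost l (Fintype.card V) < coverCost T.graph x := by
  rcases eq_or_ne (T.height x) 0 with hx₀ | hx₀
  · exact T.starCoverCost_lt_coverCost_of_height_eq_zero hx₀
  have hcard' : (6 : ℝ) ≤ Fintype.card V := by exact_mod_cast hcard
  have hheight : (2 : ℝ) ≤ T.height x := by exact_mod_cast (by omega : 2 ≤ T.height x)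
  refine lt_of_lt_of_le ?_ (T.starCoverCost_add_le_coverCost (T.mem_offCycle.mpr hx₀))
  exact lt_add_of_pos_right _ (mul_pos (by linarith) (by linarith))

theorem starCoverCost_le_coverCost (hcard : 6 ≤ Fintype.card V) (x : V) :
    starCoverCost l (Fintype.card V) ≤ coverCost T.graph x := by
  rcases eq_or_ne (T.height x) 1 with hx | hx
  · have hxO : x ∈ T.offCycle := T.mem_offCycle.mpr (by omega)
    simpa [hx] using T.starCoverCost_add_le_coverCost hxO
  · exact (T.starCoverCost_lt_coverCost hcard hx).le

theorem isStarAt_root {x : V} (hx : x ∈ T.offCycle) (hheight : ∀ v ∈ T.offCycle, T.height v = 1)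
    (hslack : ∀ v ∈ T.offCycle, T.slack v x = 0) : T.IsStarAt (T.root x) := by
  intro v hv
  have hvO := T.mem_offCycle.mpr hv
  have hroot : T.root v = T.root x :=
    sub_eq_zero.mp <| cycleRes_eq_zero_iff.mp <|
      ((T.cycleRes_le_slack hvO hx).trans (hslack v hvO).le).antisymm (cycleRes_nonneg _)
  obtain ⟨j, hj⟩ := (T.height_eq_zero_iff (T.succ v)).mp
    (by have := T.height_succ hv; have := hheight v hvO; omega)
  rw [← hroot, ← T.root_succ hv, ← hj, root_cycle]

theorem isStarAt_of_coverCost_eq {x : V} (hx : T.height x = 1)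
    (hcost : coverCost T.graph x = starCoverCost l (Fintype.card V)) : T.IsStarAt (T.root x) := by
  have hl : (3 : ℝ) ≤ l := by exact_mod_cast T.three_le
  have hslack := T.sum_sum_slack_nonneg
  rw [coverCost_graph_eq_starCoverCost_add, hx, Nat.cast_one, sub_self, mul_zero] at hcost
  have hheight₀ : ∑ v ∈ T.offCycle, ((T.height v : ℝ) - 1) = 0 := by
    nlinarith [T.sum_height_sub_one_nonneg]
  have hslack₀ : ∑ u ∈ T.offCycle, ∑ v ∈ T.offCycle, T.slack u v = 0 := by
    rw [hheight₀] at hcost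
    linarith
  rw [sum_eq_zero_iff_of_nonneg fun _ hv => T.height_sub_one_nonneg hv] at hheight₀
  rw [sum_eq_zero_iff_of_nonneg fun u hu => sum_nonneg fun v hv => T.slack_nonneg hu hv] at hslack₀
  have hxO : x ∈ T.offCycle := T.mem_offCycle.mpr (by omega)
  refine T.isStarAt_root hxO (fun v hv => ?_) fun v hv => ?_
  · exact_mod_cast sub_eq_zero.mp (hheight₀ v hv)
  · exact (sum_eq_zero_iff_of_nonneg fun u hu => T.slack_nonneg hv hu).mp (hslack₀ v hv) x hxO

namespace IsStarAt

variable {T} {i : Fin l}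

theorem slack_eq_zero (hT : T.IsStarAt i) {u v : V} (hu : u ∈ T.offCycle) (hv : v ∈ T.offCycle) :
    T.slack u v = 0 := by
  rcases eq_or_ne u v with rfl | huv
  · exact T.slack_self hu
  rw [mem_offCycle] at hu hv
  rw [slack, res, hT.height_eq_one hu, hT.height_eq_one hv, hT.root_eq hu, hT.root_eq hv,
    hT.stem_eq hu, hT.stem_eq hv]
  norm_num [huv, huv.symm]

theorem coverCost_eq (hT : T.IsStarAt i) {x : V} (hx : T.height x ≠ 0) :
    coverCost T.graph x = starCoverCost l (Fintype.card V) := by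
  have hheight : ∑ v ∈ T.offCycle, ((T.height v : ℝ) - 1) = 0 :=
    sum_eq_zero fun v hv => by rw [hT.height_eq_one (T.mem_offCycle.mp hv), Nat.cast_one, sub_self]
  have hslack : ∑ u ∈ T.offCycle, ∑ v ∈ T.offCycle, T.slack u v = 0 :=
    sum_eq_zero fun u hu => sum_eq_zero fun v hv => hT.slack_eq_zero hu hv
  simp [coverCost_graph_eq_starCoverCost_add, hheight, hslack, hT.height_eq_one hx]

theorem degree_eq_one_iff (hT : T.IsStarAt i) (x : V) :
    T.graph.degree x = 1 ↔ T.height x ≠ 0 := by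
  have hdeg : T.graph.degree x = 1 + #{v | T.succ v = x} := by exact_mod_cast T.degree_eq x
  rw [hdeg, add_eq_left, card_eq_zero, filter_eq_empty_iff]
  refine ⟨fun h hx => ?_, fun hx v _ hv => hx ?_⟩
  · obtain ⟨j, rfl⟩ := (T.height_eq_zero_iff x).mp hx
    exact h (mem_univ (T.cycle (j - 1))) (by rw [T.succ_cycle, sub_add_cancel])
  · rcases eq_or_ne (T.height v) 0 with hv₀ | hv₀
    · exact Nat.le_zero.mp (hv ▸ hv₀ ▸ T.height_succ_le v)
    · rw [← hv, hT v hv₀, height_cycle]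

end IsStarAt

theorem coverCost_eq_starCoverCost_iff (hcard : 6 ≤ Fintype.card V) (x : V) :
    coverCost T.graph x = starCoverCost l (Fintype.card V) ↔
      (∃ i, T.IsStarAt i) ∧ T.graph.degree x = 1 := by
  constructor
  · intro hcost
    have hx : T.height x = 1 := by
      by_contra hx
      exact (T.starCoverCost_lt_coverCost hcard hx).ne' hcost
    have hstar := T.isStarAt_of_coverCost_eq hx hcost
    exact ⟨⟨_, hstar⟩, (hstar.degree_eq_one_iff x).mpr (by omega)⟩
  · rintro ⟨⟨i, hstar⟩, hdeg⟩
    exact hstar.coverCost_eq ((hstar.degree_eq_one_iff x).mp hdeg)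

end CycleRootedTree

section DistToSet

variable [Fintype V] {G : SimpleGraph V} {s : Set V} {x : V}

theorem distToSet_le {y : V} (hy : y ∈ s) : distToSet G x s ≤ G.dist x y :=
  Nat.sInf_le ⟨y, hy, rfl⟩

theorem exists_dist_eq_distToSet (hs : s.Nonempty) : ∃ y ∈ s, G.dist x y = distToSet G x s :=
  Nat.sInf_mem (s := {d | ∃ y ∈ s, G.dist x y = d}) (hs.elim fun y hy => ⟨_, y, hy, rfl⟩)

theorem distToSet_eq_zero_iff (hG : G.Connected) (hs : s.Nonempty) :
    distToSet G x s = 0 ↔ x ∈ s := by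
  refine ⟨fun h => ?_, fun hx => Nat.le_zero.mp ((distToSet_le hx).trans dist_self.le)⟩
  obtain ⟨y, hy, hxy⟩ := exists_dist_eq_distToSet (G := G) (x := x) hs
  rwa [hG.dist_eq_zero_iff.mp (hxy.trans h)]

theorem exists_adj_distToSet_add_one (hG : G.Connected) (hs : s.Nonempty) (hx : x ∉ s) :
    ∃ w, G.Adj x w ∧ distToSet G w s + 1 = distToSet G x s := by
  obtain ⟨y, hy, hxy⟩ := exists_dist_eq_distToSet (G := G) (x := x) hs
  obtain ⟨p, hp⟩ := hG.exists_walk_length_eq_dist x y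
  cases p with
  | nil => exact absurd hy hx
  | @cons _ w _ hxw q =>
    refine ⟨w, hxw, le_antisymm ?_ ?_⟩
    · rw [← hxy, ← hp, Walk.length_cons]
      exact Nat.add_le_add_right ((distToSet_le hy).trans (dist_le q)) 1
    · obtain ⟨z, hz, hwz⟩ := exists_dist_eq_distToSet (G := G) (x := w) hs
      calc distToSet G x s ≤ G.dist x z := distToSet_le hz
        _ ≤ G.dist x w + G.dist w z := hG.dist_triangle
        _ = distToSet G w s + 1 := by rw [dist_eq_one_iff_adj.mpr hxw, hwz, add_comm]

end DistToSet

namespace CycleRootedTree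

variable {l : ℕ} [NeZero l]

theorem exists_graph_le [Finite V] {G : SimpleGraph V} (hG : G.Connected) (hl : 3 ≤ l)
    {c : Fin l → V} (hinj : Function.Injective c) (hadj : ∀ i, G.Adj (c i) (c (i + 1))) :
    ∃ T : CycleRootedTree V l, T.graph ≤ G := by
  have := Fintype.ofFinite V
  have hs : (Set.range c).Nonempty := Set.range_nonempty c
  choose next hnext_adj hnext_dist using fun v (hv : v ∉ Set.range c) =>
    exists_adj_distToSet_add_one hG hs hv
  let T : CycleRootedTree V l :=
    { cycle := c
      succ := fun v => if hv : v ∈ Set.range c then c (hv.choose + 1) else next v hv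
      height := fun v => distToSet G v (Set.range c)
      three_le := hl
      cycle_injective := hinj
      succ_cycle := fun i => by
        have hi : c i ∈ Set.range c := ⟨i, rfl⟩
        rw [dif_pos hi, hinj hi.choose_spec]
      height_eq_zero_iff := fun v => distToSet_eq_zero_iff hG hs
      height_succ := fun {v} hv => by
        rw [Ne, distToSet_eq_zero_iff hG hs] at hv
        rw [dif_neg hv, hnext_dist] }
  have hsucc (v : V) : G.Adj v (T.succ v) := by
    by_cases hv : v ∈ Set.range c
    · obtain ⟨i, rfl⟩ := hv
      exact T.succ_cycle i ▸ hadj i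
    · have hv' : T.succ v = next v hv := dif_neg hv
      exact hv' ▸ hnext_adj v hv
  refine ⟨T, fun u v huv => ?_⟩
  rcases huv with rfl | rfl
  exacts [hsucc u, (hsucc v).symm]

theorem esize_graph [Fintype V] (T : CycleRootedTree V l) : esize T.graph = Fintype.card V := by
  have hinj : Function.Injective fun v => s(v, T.succ v) := fun u v huv => by
    rcases Sym2.eq_iff.mp huv with h | ⟨hu, hv⟩
    · exact h.1
    · exact absurd (hu ▸ hv) (T.succ_succ_ne v)
  have hrange : T.graph.edgeSet = Set.range fun v => s(v, T.succ v) := by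
    ext e
    induction e with
    | _ u v =>
      simp only [mem_edgeSet, graph, Set.mem_range, Sym2.eq_iff]
      grind
  rw [esize, hrange, Nat.card_range_of_injective hinj, Nat.card_eq_fintype_card]

theorem exists_graph_eq [Fintype V] {G : SimpleGraph V} (hG : G.Connected)
    (hsize : esize G = Fintype.card V) (hl : 3 ≤ l)
    {c : Fin l → V} (hinj : Function.Injective c) (hadj : ∀ i, G.Adj (c i) (c (i + 1))) :
    ∃ T : CycleRootedTree V l, T.graph = G := by
  obtain ⟨T, hT⟩ := exists_graph_le hG hl hinj hadj
  refine ⟨T, edgeSet_inj.mp (Set.eq_of_subset_of_ncard_le (edgeSet_subset_edgeSet.mpr hT) ?_)⟩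
  exact (hsize.trans T.esize_graph.symm).le

section Iso

variable {W : Type*} (T : CycleRootedTree V l) (T' : CycleRootedTree W l)

/-- Graph isomorphisms from bijections that respect the out-edges. -/
def isoOfSemiconj (e : V ≃ W) (he : Function.Semiconj e T.succ T'.succ) : T.graph ≃g T'.graph where
  toEquiv := e
  map_rel_iff' {u v} := by simp [graph, ← he.eq]

/-- Every vertex either lies on the cycle or has positive height. -/
noncomputable def vertexEquiv : Fin l ⊕ {v // T.height v ≠ 0} ≃ V :=
  Equiv.ofBijective (Sum.elim T.cycle Subtype.val) <| by
    refine ⟨T.cycle_injective.sumElim Subtype.val_injective fun i v h =>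
      v.2 (h ▸ T.height_cycle i), fun v => ?_⟩
    rcases eq_or_ne (T.height v) 0 with hv | hv
    · obtain ⟨i, rfl⟩ := (T.height_eq_zero_iff v).mp hv
      exact ⟨Sum.inl i, rfl⟩
    · exact ⟨Sum.inr ⟨v, hv⟩, rfl⟩

@[simp]
theorem vertexEquiv_inl (i : Fin l) : T.vertexEquiv (Sum.inl i) = T.cycle i := rfl

@[simp]
theorem vertexEquiv_inr (v : {v // T.height v ≠ 0}) : T.vertexEquiv (Sum.inr v) = v := rfl

@[simp]
theorem vertexEquiv_symm_cycle (i : Fin l) : T.vertexEquiv.symm (T.cycle i) = Sum.inl i :=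
  T.vertexEquiv.symm_apply_apply (Sum.inl i)

@[simp]
theorem vertexEquiv_symm_coe (v : {v // T.height v ≠ 0}) :
    T.vertexEquiv.symm v = Sum.inr v :=
  T.vertexEquiv.symm_apply_apply (Sum.inr v)

variable {T T'}

theorem IsStarAt.nonempty_iso [Fintype V] [Fintype W] {i j : Fin l} (hT : T.IsStarAt i)
    (hT' : T'.IsStarAt j) (hcard : Fintype.card V = Fintype.card W) :
    Nonempty (T.graph ≃g T'.graph) := by
  have hoff : Fintype.card {v // T.height v ≠ 0} = Fintype.card {w // T'.height w ≠ 0} := by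
    have hV := Fintype.card_congr T.vertexEquiv
    have hW := Fintype.card_congr T'.vertexEquiv
    simp only [Fintype.card_sum] at hV hW
    omega
  obtain ⟨σ⟩ := Fintype.card_eq.mp hoff
  let e : V ≃ W := T.vertexEquiv.symm.trans <|
    (Equiv.sumCongr (Equiv.addRight (j - i)) σ).trans T'.vertexEquiv
  have he_cycle (k : Fin l) : e (T.cycle k) = T'.cycle (k + (j - i)) := by simp [e]
  have he_off (v : {v // T.height v ≠ 0}) : e v = σ v := by simp [e]
  refine ⟨isoOfSemiconj T T' e fun v => ?_⟩
  obtain ⟨k | v, rfl⟩ := T.vertexEquiv.surjective v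
  · rw [vertexEquiv_inl, T.succ_cycle, he_cycle, he_cycle, T'.succ_cycle, add_right_comm]
  · rw [vertexEquiv_inr, hT v v.2, he_cycle, he_off, hT' _ (σ v).2, add_sub_cancel]

/-- Transport along a bijection of the vertices. -/
def map (T : CycleRootedTree V l) (e : V ≃ W) : CycleRootedTree W l where
  cycle := e ∘ T.cycle
  succ := e ∘ T.succ ∘ e.symm
  height := T.height ∘ e.symm
  three_le := T.three_le
  cycle_injective := e.injective.comp T.cycle_injective
  succ_cycle i := by simp [T.succ_cycle]
  height_eq_zero_iff w := by simp [T.height_eq_zero_iff, e.eq_symm_apply]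
  height_succ {w} hw := by simpa using T.height_succ hw

theorem graph_map {G : SimpleGraph W} (ψ : T.graph ≃g G) : (T.map ψ.toEquiv).graph = G := by
  ext u v
  rw [← ψ.symm.map_adj_iff]
  exact or_congr ψ.toEquiv.symm_apply_eq.symm ψ.toEquiv.symm_apply_eq.symm

theorem IsStarAt.map {i : Fin l} (hT : T.IsStarAt i) (e : V ≃ W) : (T.map e).IsStarAt i :=
  fun w hw => congrArg e (hT (e.symm w) hw)

end Iso

/-- The graph `S_n^l` as a cycle-rooted tree. -/
def starTree {n : ℕ} (hl : 3 ≤ l) (hln : l ≤ n) : CycleRootedTree (Fin n) l where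
  cycle := Fin.castLE hln
  succ a := Fin.castLE hln (if h : a.val + 1 < l then ⟨a.val + 1, h⟩ else 0)
  height a := if a.val < l then 0 else 1
  three_le := hl
  cycle_injective := Fin.castLE_injective hln
  succ_cycle i := by
    refine congrArg _ (Fin.ext ?_)
    rw [val_add_one_eq_ite]
    grind [Fin.val_castLE, Fin.val_zero]
  height_eq_zero_iff a := by simp [Fin.range_castLE]
  height_succ {a} ha := by
    have ha' : ¬a.val < l := fun h => ha (if_pos h)
    rw [dif_neg (by omega), if_neg ha']
    simp [NeZero.pos]

theorem val_succ_starTree {n : ℕ} (hl : 3 ≤ l) (hln : l ≤ n) (a : Fin n) :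
    ((starTree hl hln).succ a).val = if a.val + 1 < l then a.val + 1 else 0 := by
  simp only [starTree]
  split_ifs <;> rfl

theorem graph_starTree {n : ℕ} (hl : 3 ≤ l) (hln : l ≤ n) :
    (starTree hl hln).graph = starCycle n l := by
  ext a b
  simp only [graph, starCycle, fromRel_adj, Fin.ext_iff, ne_eq, val_succ_starTree]
  split_ifs <;> omega

theorem isStarAt_starTree {n : ℕ} (hl : 3 ≤ l) (hln : l ≤ n) : (starTree hl hln).IsStarAt 0 := by
  intro a ha
  have ha' : ¬a.val + 1 < l := by
    have : l ≤ a.val := by simpa [starTree] using ha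
    omega
  exact congrArg (Fin.castLE hln) (dif_neg ha')

theorem exists_isStarAt_of_iso {n : ℕ} {G : SimpleGraph V} (hl : 3 ≤ l) (hln : l ≤ n)
    (ψ : starCycle n l ≃g G) : ∃ T : CycleRootedTree V l, T.graph = G ∧ T.IsStarAt 0 := by
  rw [← graph_starTree hl hln] at ψ
  exact ⟨_, graph_map ψ, (isStarAt_starTree hl hln).map _⟩

end CycleRootedTree

/-- For an `n`-vertex unicyclic graph `G` with cycle length
`l < n`, `n ≥ 6`, and any `x ∈ V(G)`,
`CC(x) ≥ −l³/6 + n·l²/3 + (7−12n)l/6 + n(6n−7)/3`, with equality iff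
`G ≅ S_n^l` and `x` is a pendant vertex. -/
theorem coverCost_lower [Fintype V] (G : SimpleGraph V) (n l : ℕ) [NeZero l]
    (hn : Fintype.card V = n) (hconn : G.Connected) (huni : esize G = n)
    (hl : 3 ≤ l) (hln : l ≠ n) (hn6 : 6 ≤ n)
    (c : Fin l → V) (hinj : Function.Injective c)
    (hadj : ∀ i : Fin l, G.Adj (c i) (c (i + 1))) (x : V) :
    -(l : ℝ)^3/6 + (n : ℝ)*(l : ℝ)^2/3 + (7-12*(n : ℝ))*(l : ℝ)/6
        + (n : ℝ)*(6*(n : ℝ)-7)/3 ≤ coverCost G x ∧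
    (coverCost G x = -(l : ℝ)^3/6 + (n : ℝ)*(l : ℝ)^2/3 + (7-12*(n : ℝ))*(l : ℝ)/6
        + (n : ℝ)*(6*(n : ℝ)-7)/3 ↔
      Nonempty (starCycle n l ≃g G) ∧ G.degree x = 1) := by
  subst hn
  have hln' : l ≤ Fintype.card V := by simpa using Fintype.card_le_of_injective c hinj
  obtain ⟨T, rfl⟩ := CycleRootedTree.exists_graph_eq hconn huni hl hinj hadj
  refine ⟨T.starCoverCost_le_coverCost hn6 x, fun hcost => ?_, ?_⟩
  · obtain ⟨⟨i, hstar⟩, hdeg⟩ := (T.coverCost_eq_starCoverCost_iff hn6 x).mp hcost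
    rw [← CycleRootedTree.graph_starTree hl hln']
    exact ⟨(CycleRootedTree.isStarAt_starTree hl hln').nonempty_iso hstar (by simp), hdeg⟩
  · rintro ⟨⟨ψ⟩, hdeg⟩
    obtain ⟨T', hT', hstar⟩ := CycleRootedTree.exists_isStarAt_of_iso hl hln' ψ
    rw [← hT'] at hdeg ⊢
    exact (T'.coverCost_eq_starCoverCost_iff hn6 x).mpr ⟨⟨0, hstar⟩, hdeg⟩
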